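/- For C₀ = C = 1 (Popov case on S²), if s is a rational (holomorphic) function then φ = (1 + |w|²)/(1 + |s(w)|²) · ds/dw satisfies, with h = log|φ|² and Ω = 4/(1+|w|²)², the equation Δ₀h - 2Ω(1 - e^h) = 0 wherever ds/dw ≠ 0. -/

import Mathlib

open Complex

/-- Wirtinger derivative ∂/∂w. -/
noncomputable def dw (f : ℂ → ℂ) (z : ℂ) : ℂ :=
  (1/2 : ℂ) * (fderiv ℝ f z 1 - Complex.I * fderiv ℝ f z Complex.I)

/-- Wirtinger derivative ∂/∂w̄. -/
noncomputable def dwbar (f : ℂ → ℂ) (z : ℂ) : ℂ :=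
  (1/2 : ℂ) * (fderiv ℝ f z 1 + Complex.I * fderiv ℝ f z Complex.I)

/-!
Up to a factor `2`, `h` is `log (1 + |w|²) - log (1 + |s|²) + log |s'|`. The last term is harmonic,
and each of the others is governed by Liouville's equation
`Δ log (1 + |f|²) = 4 |f'|² / (1 + |f|²)²` for holomorphic `f`: for `f = id` the right-hand side is
`Ω`, and for `f = s` it is `Ω |φ|² = Ω e^h`.
-/

open Topology Laplacian InnerProductSpace ComplexConjugate

/-- `f` is real differentiable at `z` with Wirtinger derivatives `∂f = a` and `∂̄f = b`, expressed
through the real differential `v ↦ a v + b v̄`. -/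
def HasWirtingerDerivAt (f : ℂ → ℂ) (a b z : ℂ) : Prop :=
  HasFDerivAt f (a • ContinuousLinearMap.id ℝ ℂ + b • (conjCLE : ℂ →L[ℝ] ℂ)) z

namespace HasWirtingerDerivAt

variable {f g : ℂ → ℂ} {a b c d z : ℂ}

lemma dw_eq (hf : HasWirtingerDerivAt f a b z) : dw f z = a := by
  simp only [dw, HasFDerivAt.fderiv hf, add_apply, smul_apply, smul_eq_mul,
    ContinuousLinearMap.id_apply, ContinuousLinearEquiv.coe_coe, conjCLE_apply, map_one, conj_I]
  linear_combination (b - a) / 2 * I_mul_I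

lemma dwbar_eq (hf : HasWirtingerDerivAt f a b z) : dwbar f z = b := by
  simp only [dwbar, HasFDerivAt.fderiv hf, add_apply, smul_apply, smul_eq_mul,
    ContinuousLinearMap.id_apply, ContinuousLinearEquiv.coe_coe, conjCLE_apply, map_one, conj_I]
  linear_combination (a - b) / 2 * I_mul_I

lemma of_hasDerivAt (hf : HasDerivAt f a z) : HasWirtingerDerivAt f a 0 z := by
  refine (hf.hasFDerivAt.restrictScalars ℝ).congr_fderiv (ContinuousLinearMap.ext fun v ↦ ?_)
  simp [mul_comm]

lemma star (hf : HasWirtingerDerivAt f a b z) :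
    HasWirtingerDerivAt (fun x ↦ conj (f x)) (conj b) (conj a) z := by
  refine ((conjCLE : ℂ →L[ℝ] ℂ).hasFDerivAt.comp z hf).congr_fderiv
    (ContinuousLinearMap.ext fun v ↦ ?_)
  simp [add_comm]

lemma congr_of_eventuallyEq (hf : HasWirtingerDerivAt f a b z) (hgf : g =ᶠ[𝓝 z] f) :
    HasWirtingerDerivAt g a b z :=
  HasFDerivAt.congr_of_eventuallyEq hf hgf

lemma const_add (c : ℂ) (hf : HasWirtingerDerivAt f a b z) :
    HasWirtingerDerivAt (fun x ↦ c + f x) a b z :=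
  HasFDerivAt.const_add c hf

lemma mul (hf : HasWirtingerDerivAt f a b z) (hg : HasWirtingerDerivAt g c d z) :
    HasWirtingerDerivAt (fun x ↦ f x * g x) (f z * c + a * g z) (f z * d + b * g z) z := by
  refine (HasFDerivAt.mul hf hg).congr_fderiv (ContinuousLinearMap.ext fun v ↦ ?_)
  simp only [add_apply, smul_apply, smul_eq_mul]
  ring

lemma hasDerivAt_comp (hg : HasDerivAt g c (f z)) (hf : HasWirtingerDerivAt f a b z) :
    HasWirtingerDerivAt (fun x ↦ g (f x)) (c * a) (c * b) z := by
  refine ((hg.hasFDerivAt.restrictScalars ℝ).comp z hf).congr_fderiv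
    (ContinuousLinearMap.ext fun v ↦ ?_)
  simp only [ContinuousLinearMap.comp_apply, add_apply, smul_apply, smul_eq_mul,
    ContinuousLinearMap.coe_restrictScalars', ContinuousLinearMap.toSpanSingleton_apply]
  ring

end HasWirtingerDerivAt

section Laplacian

lemma four_mul_dw_dwbar {f : ℂ → ℂ} {z : ℂ} (hf : ContDiffAt ℝ 2 f z) :
    4 * dw (dwbar f) z = Δ f z := by
  have hf' : DifferentiableAt ℝ (fderiv ℝ f) z :=
    (hf.fderiv_right (m := 1) le_rfl).differentiableAt one_ne_zero
  have fderiv_dwbar (v : ℂ) : fderiv ℝ (dwbar f) z v =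
      1 / 2 * (fderiv ℝ (fderiv ℝ f) z v 1 + I * fderiv ℝ (fderiv ℝ f) z v I) := by
    have h (u : ℂ) := hf'.hasFDerivAt.clm_apply (hasFDerivAt_const u z)
    have hdwbar : HasFDerivAt (dwbar f) _ z := ((h 1).add ((h I).const_mul I)).const_mul (1 / 2)
    simp [hdwbar.fderiv, mul_add]
  have mixed_symm : fderiv ℝ (fderiv ℝ f) z 1 I = fderiv ℝ (fderiv ℝ f) z I 1 :=
    hf.isSymmSndFDerivAt (by simp) 1 I
  simp only [dw, fderiv_dwbar, laplacian_eq_iteratedFDeriv_complexPlane, iteratedFDeriv_two_apply,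
    Matrix.cons_val_zero, Matrix.cons_val_one, mixed_symm]
  linear_combination -fderiv ℝ (fderiv ℝ f) z I I * I_mul_I

lemma four_mul_dw_dwbar_ofReal {u : ℂ → ℝ} {z : ℂ} (hu : ContDiffAt ℝ 2 u z) :
    4 * dw (dwbar fun x ↦ (u x : ℂ)) z = (Δ u z : ℝ) :=
  (four_mul_dw_dwbar (ofRealCLM.contDiff.contDiffAt.comp z hu)).trans
    (hu.laplacian_CLM_comp_left (l := ofRealCLM))

lemma laplacian_smul_sub_add_of_harmonicAt {E F : Type*} [NormedAddCommGroup E]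
    [InnerProductSpace ℝ E] [FiniteDimensional ℝ E] [NormedAddCommGroup F] [NormedSpace ℝ F]
    {u v p : E → F} {x : E} (c : ℝ) (hu : ContDiffAt ℝ 2 u x) (hv : ContDiffAt ℝ 2 v x)
    (hp : HarmonicAt p x) : Δ (c • (u - v + p)) x = c • (Δ u x - Δ v x) := by
  have huv : ContDiffAt ℝ 2 (u - v) x := hu.sub hv
  have huvp : ContDiffAt ℝ 2 (u - v + p) x := huv.add hp.1
  rw [laplacian_smul c huvp, huv.laplacian_add hp.1, hu.laplacian_sub hv, hp.2.self_of_nhds,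
    Pi.zero_apply, add_zero]

end Laplacian

section Liouville

variable {f : ℂ → ℂ} {f' z : ℂ}

lemma one_add_normSq_pos (z : ℂ) : 0 < 1 + normSq z :=
  add_pos_of_pos_of_nonneg one_pos (normSq_nonneg z)

lemma hasWirtingerDerivAt_one_add_normSq (hf : HasDerivAt f f' z) :
    HasWirtingerDerivAt (fun x ↦ ((1 + normSq (f x) : ℝ) : ℂ)) (f' * conj (f z)) (f z * conj f')
      z := by
  have hf := HasWirtingerDerivAt.of_hasDerivAt hf
  simpa [mul_conj] using (hf.mul hf.star).const_add 1

lemma dwbar_log_one_add_normSq (hf : HasDerivAt f f' z) :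
    dwbar (fun x ↦ (Real.log (1 + normSq (f x)) : ℂ)) z =
      ((1 + normSq (f z) : ℝ) : ℂ)⁻¹ * (f z * conj f') := by
  have hlog := hasDerivAt_log (ofReal_mem_slitPlane.2 (one_add_normSq_pos (f z)))
  simpa only [ofReal_log (one_add_normSq_pos _).le] using
    (HasWirtingerDerivAt.hasDerivAt_comp hlog (hasWirtingerDerivAt_one_add_normSq hf)).dwbar_eq

lemma dw_dwbar_log_one_add_normSq (hf : AnalyticAt ℂ f z) :
    dw (dwbar fun x ↦ (Real.log (1 + normSq (f x)) : ℂ)) z =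
      (normSq (deriv f z) / (1 + normSq (f z)) ^ 2 : ℝ) := by
  have hf₁ : HasDerivAt f (deriv f z) z := hf.differentiableAt.hasDerivAt
  have hf₂ : HasDerivAt (deriv f) (deriv (deriv f) z) z := hf.deriv.differentiableAt.hasDerivAt
  have hne : ((1 + normSq (f z) : ℝ) : ℂ) ≠ 0 := ofReal_ne_zero.2 (one_add_normSq_pos (f z)).ne'
  have hdwbar : dwbar (fun x ↦ (Real.log (1 + normSq (f x)) : ℂ)) =ᶠ[𝓝 z]
      fun x ↦ ((1 + normSq (f x) : ℝ) : ℂ)⁻¹ * (f x * conj (deriv f x)) := by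
    filter_upwards [hf.eventually_analyticAt] with x hx
    exact dwbar_log_one_add_normSq hx.differentiableAt.hasDerivAt
  have hinv := HasWirtingerDerivAt.hasDerivAt_comp (hasDerivAt_inv hne)
    (hasWirtingerDerivAt_one_add_normSq hf₁)
  have hnum := (HasWirtingerDerivAt.of_hasDerivAt hf₁).mul
    (HasWirtingerDerivAt.of_hasDerivAt hf₂).star
  rw [((hinv.mul hnum).congr_of_eventuallyEq hdwbar).dw_eq]
  push_cast at hne ⊢
  simp only [← mul_conj, map_zero, mul_zero, zero_add] at hne ⊢
  field_simp
  ring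

lemma contDiffAt_log_one_add_normSq {E : Type*} [NormedAddCommGroup E] [NormedSpace ℝ E]
    {n : WithTop ℕ∞} {f : E → ℂ} {x : E} (hf : ContDiffAt ℝ n f x) :
    ContDiffAt ℝ n (fun y ↦ Real.log (1 + normSq (f y))) x := by
  simp only [normSq_eq_norm_sq]
  exact (contDiffAt_const.add (hf.norm_sq ℝ)).log (by positivity)

theorem laplacian_log_one_add_normSq (hf : AnalyticAt ℂ f z) :
    Δ (fun x ↦ Real.log (1 + normSq (f x))) z =
      4 * normSq (deriv f z) / (1 + normSq (f z)) ^ 2 := by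
  have hf_real : ContDiffAt ℝ 2 f z := hf.contDiffAt.restrict_scalars ℝ
  apply ofReal_injective
  rw [← four_mul_dw_dwbar_ofReal (contDiffAt_log_one_add_normSq hf_real),
    dw_dwbar_log_one_add_normSq hf, mul_div_assoc]
  norm_cast

end Liouville

/-- The Popov vortex field `φ = (1 + |w|²) / (1 + |s|²) · s'` generated by `s`. -/
noncomputable def popovField (s : ℂ → ℂ) (w : ℂ) : ℂ :=
  ((1 + normSq w) / (1 + normSq (s w)) : ℝ) * deriv s w

section Popov

variable {s : ℂ → ℂ} {w : ℂ}

lemma normSq_popovField (s : ℂ → ℂ) (w : ℂ) :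
    normSq (popovField s w) =
      ((1 + normSq w) / (1 + normSq (s w))) ^ 2 * normSq (deriv s w) := by
  rw [popovField, normSq_mul, normSq_ofReal, sq]

lemma normSq_popovField_pos (hs' : deriv s w ≠ 0) : 0 < normSq (popovField s w) := by
  rw [normSq_popovField]
  exact mul_pos (pow_pos (div_pos (one_add_normSq_pos w) (one_add_normSq_pos (s w))) 2)
    (normSq_pos.2 hs')

lemma log_normSq_popovField (hs' : deriv s w ≠ 0) :
    Real.log (normSq (popovField s w)) =
      2 * (Real.log (1 + normSq w) - Real.log (1 + normSq (s w)) + Real.log ‖deriv s w‖) := by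
  have hw := (one_add_normSq_pos w).ne'
  have hsw := (one_add_normSq_pos (s w)).ne'
  rw [normSq_popovField, normSq_eq_norm_sq (deriv s w), ← mul_pow, Real.log_pow,
    Real.log_mul (div_ne_zero hw hsw) (norm_ne_zero_iff.2 hs'), Real.log_div hw hsw]
  norm_cast

lemma log_normSq_popovField_eventuallyEq (hs : AnalyticAt ℂ s w) (hs' : deriv s w ≠ 0) :
    (fun x ↦ Real.log (normSq (popovField s x))) =ᶠ[𝓝 w]
      (2 : ℝ) • ((fun x ↦ Real.log (1 + normSq x)) - (fun x ↦ Real.log (1 + normSq (s x))) +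
        fun x ↦ Real.log ‖deriv s x‖) := by
  filter_upwards [hs.deriv.continuousAt.eventually_ne hs'] with x hx
  exact log_normSq_popovField hx

lemma contDiffAt_log_normSq_popovField (hs : AnalyticAt ℂ s w) (hs' : deriv s w ≠ 0) :
    ContDiffAt ℝ 2 (fun x ↦ Real.log (normSq (popovField s x))) w :=
  have hs_real : ContDiffAt ℝ 2 s w := hs.contDiffAt.restrict_scalars ℝ
  ((((contDiffAt_log_one_add_normSq contDiffAt_id).sub
    (contDiffAt_log_one_add_normSq hs_real)).add
    (hs.deriv.harmonicAt_log_norm hs').1).const_smul (2 : ℝ)).congr_of_eventuallyEq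
    (log_normSq_popovField_eventuallyEq hs hs')

theorem laplacian_log_normSq_popovField (hs : AnalyticAt ℂ s w) (hs' : deriv s w ≠ 0) :
    Δ (fun x ↦ Real.log (normSq (popovField s x))) w =
      2 * (4 / (1 + normSq w) ^ 2) * (1 - normSq (popovField s w)) := by
  have laplacian_id : Δ (fun x : ℂ ↦ Real.log (1 + normSq x)) w = 4 / (1 + normSq w) ^ 2 := by
    simpa using laplacian_log_one_add_normSq (analyticAt_id (𝕜 := ℂ) (z := w))
  have hs_real : ContDiffAt ℝ 2 s w := hs.contDiffAt.restrict_scalars ℝ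
  have hw := (one_add_normSq_pos w).ne'
  calc Δ (fun x ↦ Real.log (normSq (popovField s x))) w
    _ = 2 * (Δ (fun x : ℂ ↦ Real.log (1 + normSq x)) w -
          Δ (fun x ↦ Real.log (1 + normSq (s x))) w) :=
        (laplacian_congr_nhds (log_normSq_popovField_eventuallyEq hs hs')).self_of_nhds.trans
          (laplacian_smul_sub_add_of_harmonicAt 2 (contDiffAt_log_one_add_normSq contDiffAt_id)
            (contDiffAt_log_one_add_normSq hs_real) (hs.deriv.harmonicAt_log_norm hs'))
    _ = 2 * (4 / (1 + normSq w) ^ 2 - 4 * normSq (deriv s w) / (1 + normSq (s w)) ^ 2) := by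
        rw [laplacian_id, laplacian_log_one_add_normSq hs]
    _ = 2 * (4 / (1 + normSq w) ^ 2) * (1 - normSq (popovField s w)) := by
        rw [normSq_popovField]
        field_simp

end Popov

/-- Popov (C₀ = C = 1): for `s` holomorphic, `φ = (1+|w|²)/(1+|s w|²) · s'(w)`
satisfies `Δ₀h - 2Ω(1 - e^h) = 0` with `h = log|φ|²` and `Ω = 4/(1+|w|²)²`,
wherever `s'(w) ≠ 0`. -/
theorem stmt10 (U : Set ℂ) (hU : IsOpen U) (s : ℂ → ℂ)
    (hs : DifferentiableOn ℂ s U) :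
    ∀ w ∈ U, deriv s w ≠ 0 →
      let φ : ℂ → ℂ := fun x =>
        (((1 + Complex.normSq x) / (1 + Complex.normSq (s x)) : ℝ) : ℂ) * deriv s x
      let h : ℂ → ℝ := fun x => Real.log (Complex.normSq (φ x))
      let Ω : ℂ → ℝ := fun x => 4 / (1 + Complex.normSq x) ^ 2
      4 * dw (fun x => dwbar (fun y => (h y : ℂ)) x) w -
        2 * (Ω w : ℂ) * (1 - Complex.exp (h w)) = 0 := by
  intro w hw hs' φ h Ω
  have hsw : AnalyticAt ℂ s w := hs.analyticAt (hU.mem_nhds hw)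
  have hlap : 4 * dw (dwbar fun y ↦ (h y : ℂ)) w = (Δ h w : ℝ) :=
    four_mul_dw_dwbar_ofReal (contDiffAt_log_normSq_popovField hsw hs')
  have hexp : Real.exp (h w) = normSq (φ w) := Real.exp_log (normSq_popovField_pos hs')
  have hpopov : Δ h w = 2 * Ω w * (1 - Real.exp (h w)) := by
    rw [hexp]
    exact laplacian_log_normSq_popovField hsw hs'
  rw [hlap, hpopov]
  push_cast
  exact sub_self _
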